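/- Let X_1, X_2, … be identically distributed random variables in a sub-linear expectation space with 𝔼[|X_1|^{2+γ}] < ∞ for some γ > 0. Set S_n = Σ_{k=1}^n X_k, a_n = √(2n·log log n) (with log x = ln(max(x, e))), σ̄₁² = 𝔼[(X_1 − ℰ[X_1])²] and σ̄₂² = 𝔼[(X_1 − 𝔼[X_1])²]. If X_1, X_2, … are upper extended negatively dependent, then 𝕍*( limsup_{n→∞} (S_n − n·𝔼[X_1])/a_n > σ̄₂ ) = 0. If X_1, X_2, … are extended negatively dependent, then 𝕍*( { liminf_{n→∞} (S_n − n·ℰ[X_1])/a_n < −σ̄₁ } ∪ { limsup_{n→∞} (S_n − n·𝔼[X_1])/a_n > σ̄₂ } ) = 0. -/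

import Mathlib

open Filter MeasureTheory
open scoped ENNReal NNReal

noncomputable section

/-- A sub-linear expectation on `Ω`: a monotone, constant-preserving, sub-additive,
positively homogeneous functional on real random variables (with values in the
extended reals, so that random variables without a finite expectation are allowed). -/
structure SublinearExp (Ω : Type) where
  E : (Ω → ℝ) → EReal
  mono : ∀ X Y : Ω → ℝ, (∀ ω, X ω ≤ Y ω) → E X ≤ E Y
  const_eq : ∀ c : ℝ, E (fun _ => c) = (c : EReal)
  subadd : ∀ X Y : Ω → ℝ, E (fun ω => X ω + Y ω) ≤ E X + E Y
  pos_homog : ∀ lam : ℝ, 0 ≤ lam → ∀ X : Ω → ℝ,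
    E (fun ω => lam * X ω) = (lam : EReal) * E X

namespace SublinearExp

variable {Ω : Type}

/-- The conjugate expectation `ℰ[X] := −𝔼[−X]`. -/
def cE (SL : SublinearExp Ω) (X : Ω → ℝ) : EReal := - SL.E fun ω => - X ω

/-- The upper capacity `𝕍(A) := inf{𝔼[ξ] : 1_A ≤ ξ}`. -/
def V (SL : SublinearExp Ω) (A : Set Ω) : ℝ :=
  sInf {x : ℝ | ∃ ξ : Ω → ℝ,
    (∀ ω, A.indicator (fun _ => (1 : ℝ)) ω ≤ ξ ω) ∧ SL.E ξ = (x : EReal)}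

/-- The lower capacity `𝓋(A) := 1 − 𝕍(Aᶜ)`. -/
def vLow (SL : SublinearExp Ω) (A : Set Ω) : ℝ := 1 - SL.V Aᶜ

/-- The Choquet integral `C_𝕍(X) := ∫₀^∞ 𝕍(X ≥ t) dt` (of a non-negative r.v.). -/
def Choquet (SL : SublinearExp Ω) (X : Ω → ℝ) : ℝ≥0∞ :=
  ∫⁻ t in Set.Ioi (0 : ℝ), ENNReal.ofReal (SL.V {ω | t ≤ X ω})

/-- The outer capacity `𝕍*(A) := inf{Σ_n 𝕍(A_n) : A ⊆ ∪_n A_n}`. -/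
def Vout (SL : SublinearExp Ω) (A : Set Ω) : ℝ≥0∞ :=
  ⨅ (B : ℕ → Set Ω) (_ : A ⊆ ⋃ n, B n), ∑' n, ENNReal.ofReal (SL.V (B n))

/-- The upper capacity is continuous: continuous from below and from above. -/
def ContinuousCapacity (SL : SublinearExp Ω) : Prop :=
  (∀ A : ℕ → Set Ω, Monotone A →
    Tendsto (fun n => SL.V (A n)) atTop (nhds (SL.V (⋃ n, A n)))) ∧
  (∀ A : ℕ → Set Ω, Antitone A →
    Tendsto (fun n => SL.V (A n)) atTop (nhds (SL.V (⋂ n, A n))))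

/-- Bounded Lipschitz function on ℝ. -/
def IsBLip (g : ℝ → ℝ) : Prop :=
  (∃ L : NNReal, LipschitzWith L g) ∧ ∃ M : ℝ, ∀ x, |g x| ≤ M

/-- Local Lipschitz function on ℝ: `|φ(x) − φ(y)| ≤ C(1+|x|^m+|y|^m)|x−y|`. -/
def IsLocLip (φ : ℝ → ℝ) : Prop :=
  ∃ (C : ℝ) (m : ℕ), ∀ x y : ℝ, |φ x - φ y| ≤ C * (1 + |x| ^ m + |y| ^ m) * |x - y|

/-- Upper extended negative dependence (finite family) with dominating constant `K`:
`𝔼[∏ g_i(X_i)] ≤ K ∏ 𝔼[g_i(X_i)]` for all non-negative bounded Lipschitz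
non-decreasing `g_i`.  (Expectations of bounded functions are finite, whence
the `toReal`.) -/
def UENDFin (SL : SublinearExp Ω) (K : ℝ) {n : ℕ} (X : Fin n → Ω → ℝ) : Prop :=
  ∀ g : Fin n → ℝ → ℝ, (∀ i, IsBLip (g i)) → (∀ i, Monotone (g i)) →
    (∀ i x, 0 ≤ g i x) →
    SL.E (fun ω => ∏ i, g i (X i ω)) ≤
      ((K * ∏ i, (SL.E fun ω => g i (X i ω)).toReal : ℝ) : EReal)

/-- Upper extended negative dependence for a sequence. -/
def UEND (SL : SublinearExp Ω) (K : ℝ) (X : ℕ → Ω → ℝ) : Prop :=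
  ∀ n : ℕ, ∀ g : ℕ → ℝ → ℝ, (∀ i, IsBLip (g i)) → (∀ i, Monotone (g i)) →
    (∀ i x, 0 ≤ g i x) →
    SL.E (fun ω => ∏ i ∈ Finset.range n, g i (X i ω)) ≤
      ((K * ∏ i ∈ Finset.range n, (SL.E fun ω => g i (X i ω)).toReal : ℝ) : EReal)

/-- Lower extended negative dependence for a sequence. -/
def LEND (SL : SublinearExp Ω) (K : ℝ) (X : ℕ → Ω → ℝ) : Prop :=
  ∀ n : ℕ, ∀ g : ℕ → ℝ → ℝ, (∀ i, IsBLip (g i)) → (∀ i, Antitone (g i)) →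
    (∀ i x, 0 ≤ g i x) →
    SL.E (fun ω => ∏ i ∈ Finset.range n, g i (X i ω)) ≤
      ((K * ∏ i ∈ Finset.range n, (SL.E fun ω => g i (X i ω)).toReal : ℝ) : EReal)

/-- Extended negative dependence = upper and lower END. -/
def END (SL : SublinearExp Ω) (K : ℝ) (X : ℕ → Ω → ℝ) : Prop :=
  UEND SL K X ∧ LEND SL K X

/-- Upper extended negative dependence under the conjugate expectation `ℰ`
(finite family). -/
def UENDFinConj (SL : SublinearExp Ω) (K : ℝ) {n : ℕ} (X : Fin n → Ω → ℝ) : Prop :=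
  ∀ g : Fin n → ℝ → ℝ, (∀ i, IsBLip (g i)) → (∀ i, Monotone (g i)) →
    (∀ i x, 0 ≤ g i x) →
    SL.cE (fun ω => ∏ i, g i (X i ω)) ≤
      ((K * ∏ i, (SL.cE fun ω => g i (X i ω)).toReal : ℝ) : EReal)

/-- Upper extended negative dependence under the conjugate expectation (sequence). -/
def UENDconj (SL : SublinearExp Ω) (K : ℝ) (X : ℕ → Ω → ℝ) : Prop :=
  ∀ n : ℕ, ∀ g : ℕ → ℝ → ℝ, (∀ i, IsBLip (g i)) → (∀ i, Monotone (g i)) →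
    (∀ i x, 0 ≤ g i x) →
    SL.cE (fun ω => ∏ i ∈ Finset.range n, g i (X i ω)) ≤
      ((K * ∏ i ∈ Finset.range n, (SL.cE fun ω => g i (X i ω)).toReal : ℝ) : EReal)

/-- Lower extended negative dependence under the conjugate expectation (sequence). -/
def LENDconj (SL : SublinearExp Ω) (K : ℝ) (X : ℕ → Ω → ℝ) : Prop :=
  ∀ n : ℕ, ∀ g : ℕ → ℝ → ℝ, (∀ i, IsBLip (g i)) → (∀ i, Antitone (g i)) →
    (∀ i x, 0 ≤ g i x) →
    SL.cE (fun ω => ∏ i ∈ Finset.range n, g i (X i ω)) ≤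
      ((K * ∏ i ∈ Finset.range n, (SL.cE fun ω => g i (X i ω)).toReal : ℝ) : EReal)

/-- Extended negative dependence under the conjugate expectation. -/
def ENDconj (SL : SublinearExp Ω) (K : ℝ) (X : ℕ → Ω → ℝ) : Prop :=
  UENDconj SL K X ∧ LENDconj SL K X

/-- Extended independence of a sequence:
`𝔼[∏ ψ_i(X_i)] = ∏ 𝔼[ψ_i(X_i)]` for non-negative local Lipschitz `ψ_i`,
whenever the expectations involved are finite. -/
def ExtIndep (SL : SublinearExp Ω) (X : ℕ → Ω → ℝ) : Prop :=
  ∀ n : ℕ, ∀ ψ : ℕ → ℝ → ℝ, (∀ i, IsLocLip (ψ i)) → (∀ i x, 0 ≤ ψ i x) →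
    (∀ i ∈ Finset.range n, SL.E (fun ω => ψ i (X i ω)) ≠ ⊤) →
    SL.E (fun ω => ∏ i ∈ Finset.range n, ψ i (X i ω)) =
      ((∏ i ∈ Finset.range n, (SL.E fun ω => ψ i (X i ω)).toReal : ℝ) : EReal)

/-- Extended independence of two random variables. -/
def ExtIndepPair (SL : SublinearExp Ω) (Y Z : Ω → ℝ) : Prop :=
  ∀ ψ₁ ψ₂ : ℝ → ℝ, IsLocLip ψ₁ → IsLocLip ψ₂ →
    (∀ x, 0 ≤ ψ₁ x) → (∀ x, 0 ≤ ψ₂ x) →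
    SL.E (fun ω => ψ₁ (Y ω)) ≠ ⊤ → SL.E (fun ω => ψ₂ (Z ω)) ≠ ⊤ →
    SL.E (fun ω => ψ₁ (Y ω) * ψ₂ (Z ω)) =
      (((SL.E fun ω => ψ₁ (Y ω)).toReal * (SL.E fun ω => ψ₂ (Z ω)).toReal : ℝ) : EReal)

/-- Identically distributed: `𝔼[φ(X_i)] = 𝔼[φ(X_1)]` for all local Lipschitz `φ`. -/
def IdentDist (SL : SublinearExp Ω) (X : ℕ → Ω → ℝ) : Prop :=
  ∀ (i : ℕ) (φ : ℝ → ℝ), IsLocLip φ →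
    SL.E (fun ω => φ (X i ω)) = SL.E fun ω => φ (X 0 ω)

end SublinearExp

/-- `log x = ln(x ∨ e)`. -/
def paperLog (x : ℝ) : ℝ := Real.log (max x (Real.exp 1))

/-- `a_n = √(2 n log log n)` with the above convention for `log`. -/
def lilA (n : ℕ) : ℝ := Real.sqrt (2 * n * paperLog (paperLog n))

/-!
The variables at time about `2 ^ j` are truncated at `β ^ j` with `β < √2` and `2 < β ^ p`: by
Markov and Borel–Cantelli for the outer measure `𝕍*` the truncation is eventually invisible, and it
is small enough that the Chernoff bound for the truncated sums has the sharp Gaussian exponent.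

There is no maximal inequality under extended negative dependence. Instead, within the scale
`n ≍ M 2 ^ j`, the partial sum up to `n` is split at the last multiple of `2 ^ j / j` before `n`,
and then at the last multiple of `2 ^ j` before that. The initial piece takes `O(M)` values,
a number that does not grow with `j`, so that plain Borel–Cantelli gives the sharp constant.
The other two pieces, of lengths at most `2 ^ j` and about `2 ^ j / j`, range over `O(M j)` and
`O(M 2 ^ j)` intervals, and are `O(√(2 ^ j log log 2 ^ j))` with a constant not depending on `M`;
against `√(n log log n)` this is a factor `O(1 / √M)`, which is made arbitrarily small.

The lower half is the upper half for `-X`, which is upper dependent as soon as `X` is lower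
dependent.
-/

section

open Finset Real

lemma rpow_le_one_add_rpow {x p q : ℝ} (hx : 0 ≤ x) (hq : 0 ≤ q) (hqp : q ≤ p) :
    x ^ q ≤ 1 + x ^ p := by
  rcases le_total x 1 with h | h
  · exact (rpow_le_one hx h hq).trans (le_add_of_nonneg_right (rpow_nonneg hx p))
  · exact (rpow_le_rpow_of_exponent_le h hqp).trans (le_add_of_nonneg_left zero_le_one)

lemma abs_sub_rpow_le (x y : ℝ) {p : ℝ} (hp : 1 ≤ p) :
    |x - y| ^ p ≤ 2 ^ (p - 1) * (|x| ^ p + |y| ^ p) :=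
  calc |x - y| ^ p ≤ (|x| + |y|) ^ p := rpow_le_rpow (abs_nonneg _) (abs_sub x y) (by linarith)
    _ ≤ 2 ^ (p - 1) * (|x| ^ p + |y| ^ p) := by
      exact_mod_cast NNReal.rpow_add_le_mul_rpow_add_rpow ‖x‖₊ ‖y‖₊ hp

lemma exp_le_one_add_add_sq_mul_exp {y c : ℝ} (hyc : y ≤ c) (hc : 0 ≤ c) :
    exp y ≤ 1 + y + y ^ 2 / 2 * exp c := by
  rcases eq_or_ne 0 y with rfl | hy
  · simp
  obtain ⟨ξ, hξ, htaylor⟩ :=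
    taylor_mean_remainder_lagrange_iteratedDeriv (n := 1) hy contDiff_exp.contDiffOn
  have hderiv : derivWithin exp (Set.uIcc 0 y) 0 = 1 := by
    rw [(hasDerivAt_exp 0).hasDerivWithinAt.derivWithin
      (uniqueDiffOn_uIcc hy 0 Set.left_mem_uIcc), exp_zero]
  have hexp : exp y - (1 + y) = exp ξ * y ^ 2 / 2 := by
    simpa [taylorWithinEval_succ, hderiv, iteratedDeriv_eq_iterate] using htaylor
  have hξc : exp ξ ≤ exp c := exp_le_exp.2 (hξ.2.le.trans (max_le hc hyc))
  nlinarith [mul_le_mul_of_nonneg_right hξc (sq_nonneg y)]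

lemma exists_rpow_gt_two_and_lt_sqrt_two {p : ℝ} (hp : 2 < p) :
    ∃ β : ℝ, 0 < β ∧ β < √2 ∧ 2 < β ^ p := by
  have hlt : (2 : ℝ) ^ p⁻¹ < √2 := by
    rw [sqrt_eq_rpow, one_div]
    exact rpow_lt_rpow_of_exponent_lt one_lt_two (inv_strictAnti₀ two_pos hp)
  obtain ⟨β, hpβ, hβ⟩ := exists_between hlt
  refine ⟨β, (by positivity : (0 : ℝ) < 2 ^ p⁻¹).trans hpβ, hβ, ?_⟩
  calc (2 : ℝ) = (2 ^ p⁻¹) ^ p := (rpow_inv_rpow two_pos.le (by linarith)).symm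
    _ < β ^ p := rpow_lt_rpow (by positivity) hpβ (by linarith)

lemma div_div_lt_two_mul_mul {n N M c : ℕ} (hM : 0 < M) (hMN : M ≤ N) (hn : n < c * N) :
    n / (N / M) < 2 * c * M := by
  have hpos : 0 < N / M := Nat.div_pos hMN hM
  have hN : N ≤ 2 * M * (N / M) := by nlinarith [Nat.lt_mul_div_succ N hM]
  rw [Nat.div_lt_iff_lt_mul hpos]
  nlinarith [Nat.mul_le_mul_left c hN]

lemma sub_div_div_mul_mul_le (n : ℕ) {N M : ℕ} (hMN : M ≤ N) :
    (n - n / (N / M) * (N / M)) * M ≤ N := by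
  rcases Nat.eq_zero_or_pos M with rfl | hM
  · simp
  · exact (Nat.mul_le_mul_right M (tsub_le_iff_left.2
      (Nat.lt_div_mul_add (Nat.div_pos hMN hM)).le)).trans (Nat.div_mul_le_self N M)

lemma eventually_of_eventually_dyadic_block {M : ℕ} (hM : 0 < M) {P : ℕ → Prop}
    (h : ∀ᶠ j in atTop, ∀ n, M * 2 ^ j ≤ n → n < 2 * M * 2 ^ j → P n) : ∀ᶠ n in atTop, P n := by
  have hlog : Tendsto (fun n => Nat.log 2 (n / M)) atTop atTop :=
    tendsto_atTop.2 fun j => (eventually_ge_atTop (2 ^ j * M)).mono fun n hn =>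
      Nat.le_log_of_pow_le one_lt_two ((Nat.le_div_iff_mul_le hM).2 hn)
  filter_upwards [hlog.eventually h, eventually_ge_atTop M] with n hn hMn
  refine hn n ?_ ?_
  · rw [mul_comm, ← Nat.le_div_iff_mul_le hM]
    exact Nat.pow_log_le_self 2 (Nat.div_pos hMn hM).ne'
  · rw [mul_right_comm, ← pow_succ', ← Nat.div_lt_iff_lt_mul hM]
    exact Nat.lt_pow_succ_log_self one_lt_two _

lemma ae_limsup_le {α : Type*} {μ : OuterMeasure α} {u : ℕ → α → ℝ} {a : ℝ}
    (h : ∀ s > a, ∀ᵐ ω ∂μ, ∀ᶠ n in atTop, u n ω ≤ s) :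
    ∀ᵐ ω ∂μ, limsup (fun n => (u n ω : EReal)) atTop ≤ a := by
  obtain ⟨s, -, hs, hlim⟩ := exists_seq_strictAnti_tendsto a
  filter_upwards [ae_all_iff.2 fun m => h (s m) (hs m)] with ω hω
  refine ge_of_tendsto' ((continuous_coe_real_ereal.tendsto a).comp hlim) fun m => ?_
  exact limsup_le_of_le (h := (hω m).mono fun n hn => EReal.coe_le_coe_iff.2 hn)

namespace SublinearExp

lemma isLocLip_neg : IsLocLip fun x => -x :=
  ⟨1, 0, fun x y => by
    rw [neg_sub_neg, abs_sub_comm, pow_zero, pow_zero]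
    linarith [abs_nonneg (x - y)]⟩

lemma isLocLip_id : IsLocLip fun x => x :=
  ⟨1, 0, fun x y => by simp only [pow_zero]; linarith [abs_nonneg (x - y)]⟩

lemma isLocLip_sub_sq (c : ℝ) : IsLocLip fun x => (x - c) ^ 2 := by
  refine ⟨1 + 2 * |c|, 1, fun x y => ?_⟩
  have hfactor : (x - c) ^ 2 - (y - c) ^ 2 = (x + y - 2 * c) * (x - y) := by ring
  have hsum : |x + y - 2 * c| ≤ |x| + |y| + 2 * |c| := by
    have := (abs_sub (x + y) (2 * c)).trans (add_le_add_left (abs_add_le x y) _)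
    rwa [abs_mul, abs_two] at this
  rw [hfactor, abs_mul, pow_one, pow_one]
  refine mul_le_mul_of_nonneg_right (hsum.trans ?_) (abs_nonneg _)
  nlinarith [abs_nonneg x, abs_nonneg y, abs_nonneg c]

lemma isLocLip_abs_rpow {p : ℝ} (hp : 1 < p) : IsLocLip fun x => |x| ^ p := by
  refine ⟨p, ⌈p⌉₊, fun x y => ?_⟩
  refine (convex_uIcc y x).norm_image_sub_le_of_norm_hasDerivWithin_le
    (fun z _ => (hasDerivAt_abs_rpow z hp).hasDerivWithinAt) (fun z hz => ?_)
    Set.left_mem_uIcc Set.right_mem_uIcc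
  have hz_pow : |z| ^ ⌈p⌉₊ ≤ |x| ^ ⌈p⌉₊ + |y| ^ ⌈p⌉₊ := by
    have hx := pow_nonneg (abs_nonneg x) ⌈p⌉₊
    have hy := pow_nonneg (abs_nonneg y) ⌈p⌉₊
    have hzmax : |z| ≤ |x| ∨ |z| ≤ |y| := by
      rcases Set.mem_uIcc.1 hz with ⟨hl, hr⟩ | ⟨hl, hr⟩
      · exact (le_max_iff.1 (abs_le_max_abs_abs hl hr)).symm
      · exact le_max_iff.1 (abs_le_max_abs_abs hl hr)
    rcases hzmax with h | h <;> linarith [pow_le_pow_left₀ (abs_nonneg z) h ⌈p⌉₊]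
  have hderiv : |z| ^ (p - 2) * |z| ≤ 1 + |z| ^ ⌈p⌉₊ := by
    rcases eq_or_ne z 0 with rfl | hz0
    · rw [abs_zero, mul_zero]
      positivity
    · rw [← rpow_add_one (abs_ne_zero.2 hz0), ← rpow_natCast]
      exact rpow_le_one_add_rpow (abs_nonneg z) (by linarith) (by linarith [Nat.le_ceil p])
  rw [norm_mul, norm_mul, norm_rpow_of_nonneg (abs_nonneg z),
    Real.norm_of_nonneg (by linarith : 0 ≤ p)]
  simp only [Real.norm_eq_abs, abs_abs]
  nlinarith

variable {Ω : Type} {SL : SublinearExp Ω}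

lemma E_ne_bot (X : Ω → ℝ) : SL.E X ≠ ⊥ := by
  intro h
  have hle := SL.subadd X fun ω => -X ω
  simp only [add_neg_cancel, h, EReal.bot_add, SL.const_eq 0, le_bot_iff] at hle
  exact EReal.coe_ne_bot 0 hle

lemma E_nonneg {X : Ω → ℝ} (h : ∀ ω, 0 ≤ X ω) : 0 ≤ SL.E X := by
  simpa only [SL.const_eq, EReal.coe_zero] using SL.mono (fun _ => 0) X h

lemma E_add_le {X Y : Ω → ℝ} {a b : ℝ} (hX : SL.E X ≤ a) (hY : SL.E Y ≤ b) :
    SL.E (fun ω => X ω + Y ω) ≤ (a + b : ℝ) := by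
  rw [EReal.coe_add]
  exact (SL.subadd X Y).trans (add_le_add hX hY)

lemma E_mul_le {X : Ω → ℝ} {a c : ℝ} (hc : 0 ≤ c) (hX : SL.E X ≤ a) :
    SL.E (fun ω => c * X ω) ≤ (c * a : ℝ) := by
  rw [EReal.coe_mul, SL.pos_homog c hc]
  exact mul_le_mul_of_nonneg_left hX (EReal.coe_nonneg.2 hc)

lemma E_le_of_le_add_mul {X Y : Ω → ℝ} {a c r : ℝ} (hc : 0 ≤ c) (hX : SL.E X ≤ r)
    (h : ∀ ω, Y ω ≤ a + c * X ω) : SL.E Y ≤ (a + c * r : ℝ) :=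
  (SL.mono _ _ h).trans (E_add_le (SL.const_eq a).le (E_mul_le hc hX))

lemma V_le {A : Set Ω} {ξ : Ω → ℝ} {c : ℝ} (hξ : ∀ ω, 0 ≤ ξ ω) (hA : ∀ ω ∈ A, 1 ≤ ξ ω)
    (hc : SL.E ξ ≤ c) : SL.V A ≤ c := by
  have hreal : SL.E ξ = ((SL.E ξ).toReal : EReal) :=
    (EReal.coe_toReal (ne_top_of_le_ne_top (EReal.coe_ne_top c) hc) (E_ne_bot ξ)).symm
  have hbdd : BddBelow {x : ℝ | ∃ η : Ω → ℝ,
      (∀ ω, A.indicator (fun _ => (1 : ℝ)) ω ≤ η ω) ∧ SL.E η = (x : EReal)} :=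
    ⟨0, fun x ⟨η, hη, hx⟩ => EReal.coe_nonneg.1 <| hx ▸ E_nonneg fun ω =>
      (Set.indicator_nonneg (fun _ _ => zero_le_one) ω).trans (hη ω)⟩
  calc SL.V A ≤ (SL.E ξ).toReal :=
        csInf_le hbdd ⟨ξ, Set.indicator_le' hA fun ω _ => hξ ω, hreal⟩
    _ ≤ c := by rwa [hreal, EReal.coe_le_coe_iff] at hc

lemma V_lt_le_of_E_abs_rpow_le {X : Ω → ℝ} {p b C : ℝ} (hp : 0 ≤ p) (hb : 0 < b)
    (hX : SL.E (fun ω => |X ω| ^ p) ≤ C) : SL.V {ω | b < X ω} ≤ (b ^ p)⁻¹ * C := by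
  refine V_le (fun ω => by positivity) (fun ω hω => ?_) (E_mul_le (by positivity) hX)
  rw [inv_mul_eq_div, one_le_div (by positivity)]
  exact rpow_le_rpow hb.le ((Set.mem_ofPred_eq ▸ hω).le.trans (le_abs_self _)) hp

variable (SL) in
/-- The outer capacity `𝕍*` as an outer measure, so that quasi surely is `∀ᵐ ω ∂SL.outer`. -/
def outer : OuterMeasure Ω :=
  OuterMeasure.ofFunction (fun A => ENNReal.ofReal (SL.V A)) <| ENNReal.ofReal_eq_zero.2 <|
    V_le (fun _ => le_rfl) (fun _ h => h.elim) (SL.const_eq 0).le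

lemma Vout_eq_outer (A : Set Ω) : SL.Vout A = SL.outer A := rfl

lemma outer_le {A : Set Ω} {w : ℝ} (h : SL.V A ≤ w) : SL.outer A ≤ ENNReal.ofReal w :=
  (OuterMeasure.ofFunction_le A).trans (ENNReal.ofReal_le_ofReal h)

lemma ae_eventually_forall_lt_le {Y : ℕ → ℕ → Ω → ℝ} {y : ℕ → ℕ → ℝ} {n : ℕ → ℕ} {w : ℕ → ℝ}
    (hV : ∀ᶠ j in atTop, ∀ i < n j, SL.V {ω | y j i < Y j i ω} ≤ w j)
    (hw : Summable fun j => n j * w j) :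
    ∀ᵐ ω ∂SL.outer, ∀ᶠ j in atTop, ∀ i < n j, Y j i ω ≤ y j i := by
  obtain ⟨J, hJ⟩ := eventually_atTop.1 hV
  set A : ℕ → Set Ω := fun j => ⋃ i ∈ range (n (j + J)), {ω | y (j + J) i < Y (j + J) i ω}
  have hA : ∀ j, SL.outer (A j) ≤ ENNReal.ofReal (n (j + J) * w (j + J)) := fun j =>
    calc SL.outer (A j) ≤ ∑ _i ∈ range (n (j + J)), ENNReal.ofReal (w (j + J)) :=
          (measure_biUnion_finset_le _ _).trans <| sum_le_sum fun i hi =>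
            outer_le (hJ _ (Nat.le_add_left J j) i (mem_range.1 hi))
      _ = ENNReal.ofReal (n (j + J) * w (j + J)) := by
          rw [sum_const, card_range, nsmul_eq_mul, ENNReal.ofReal_mul (Nat.cast_nonneg _),
            ENNReal.ofReal_natCast]
  have hsum : ∑' j, SL.outer (A j) ≠ ∞ :=
    ne_top_of_le_ne_top ((summable_nat_add_iff J).2 hw).tsum_ofReal_ne_top
      (ENNReal.tsum_le_tsum hA)
  filter_upwards [ae_eventually_notMem hsum] with ω hω
  rw [← map_add_atTop_eq_nat J, eventually_map]
  filter_upwards [hω] with j hj i hi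
  exact not_lt.1 fun hlt => hj (Set.mem_biUnion (mem_range.2 hi) hlt)

lemma lipschitzWith_exp_mul_min {t : ℝ} (ht : 0 ≤ t) (b : ℝ) :
    LipschitzWith (t * exp (t * b)).toNNReal fun x : ℝ => exp (t * min x b) := by
  refine LipschitzWith.of_le_add_mul' _ fun x y => ?_
  have htangent : exp (t * min x b) * (1 + t * (min y b - min x b)) ≤ exp (t * min y b) := by
    rw [show t * min y b = t * min x b + t * (min y b - min x b) by ring, exp_add, add_comm 1]
    exact mul_le_mul_of_nonneg_left (add_one_le_exp _) (exp_pos _).le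
  have hmin : min x b - min y b ≤ dist x y := by
    simpa only [sub_self, abs_zero, dist_nonneg, sup_of_le_left, ← Real.dist_eq]
      using (le_abs_self _).trans (abs_min_sub_min_le_max x b y b)
  have hexp : exp (t * min x b) ≤ exp (t * b) :=
    exp_le_exp.2 (mul_le_mul_of_nonneg_left (min_le_right x b) ht)
  have hgap : exp (t * min x b) * (t * (min x b - min y b)) ≤ exp (t * b) * (t * dist x y) :=
    calc exp (t * min x b) * (t * (min x b - min y b))
      _ ≤ exp (t * min x b) * (t * dist x y) := by gcongr
      _ ≤ exp (t * b) * (t * dist x y) := by gcongr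
  linarith

lemma isBLip_exp_mul_min {t : ℝ} (ht : 0 ≤ t) (b : ℝ) : IsBLip fun x => exp (t * min x b) := by
  refine ⟨⟨_, lipschitzWith_exp_mul_min ht b⟩, exp (t * b), fun x => ?_⟩
  rw [abs_exp]
  exact exp_le_exp.2 (mul_le_mul_of_nonneg_left (min_le_right x b) ht)

lemma isBLip_one : IsBLip fun _ => 1 :=
  ⟨⟨0, LipschitzWith.const 1⟩, 1, fun _ => abs_one.le⟩

lemma E_exp_mul_min_le {Z : Ω → ℝ} {t b v : ℝ} (ht : 0 ≤ t) (hb : 0 ≤ b)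
    (hmean : SL.E Z ≤ 0) (hvar : SL.E (fun ω => Z ω ^ 2) ≤ v) :
    SL.E (fun ω => exp (t * min (Z ω) b)) ≤ (exp (t ^ 2 * v * exp (t * b) / 2) : ℝ) := by
  set q := t ^ 2 * exp (t * b) / 2 with hq
  have hquad : ∀ ω, exp (t * min (Z ω) b) ≤ 1 + 1 * (t * Z ω + q * Z ω ^ 2) := fun ω => by
    have hmin_sq : min (Z ω) b ^ 2 ≤ Z ω ^ 2 := by
      rcases le_total (Z ω) b with h | h
      · rw [min_eq_left h]
      · rw [min_eq_right h]
        exact pow_le_pow_left₀ hb h 2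
    calc exp (t * min (Z ω) b)
        ≤ 1 + t * min (Z ω) b + (t * min (Z ω) b) ^ 2 / 2 * exp (t * b) :=
          exp_le_one_add_add_sq_mul_exp
            (mul_le_mul_of_nonneg_left (min_le_right _ _) ht) (mul_nonneg ht hb)
      _ = 1 + (t * min (Z ω) b + q * min (Z ω) b ^ 2) := by rw [hq]; ring
      _ ≤ 1 + (t * Z ω + q * Z ω ^ 2) := by gcongr; exact min_le_left _ _
      _ = 1 + 1 * (t * Z ω + q * Z ω ^ 2) := by rw [one_mul]
  refine (E_le_of_le_add_mul zero_le_one (E_add_le (E_mul_le (a := 0) ht hmean)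
    (E_mul_le (by positivity) hvar)) hquad).trans (EReal.coe_le_coe_iff.2 ?_)
  calc 1 + 1 * (t * 0 + q * v) = t ^ 2 * v * exp (t * b) / 2 + 1 := by rw [hq]; ring
    _ ≤ exp (t ^ 2 * v * exp (t * b) / 2) := add_one_le_exp _

variable {K : ℝ} {Z : ℕ → Ω → ℝ}

lemma UEND.one_le (hU : UEND SL K Z) : 1 ≤ K := by
  have h := hU 0 (fun _ _ => 1) (fun _ => isBLip_one) (fun _ => monotone_const)
    fun _ _ => zero_le_one
  simp only [range_zero, prod_empty, mul_one, SL.const_eq] at h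
  exact EReal.coe_le_coe_iff.1 h

lemma UEND.E_prod_Ico_le {g : ℝ → ℝ} {R : ℝ} (hU : UEND SL K Z) (hg : IsBLip g)
    (hmono : Monotone g) (hg0 : ∀ x, 0 ≤ g x) (hR : ∀ k, SL.E (fun ω => g (Z k ω)) ≤ R)
    (a c : ℕ) :
    SL.E (fun ω => ∏ k ∈ Ico a c, g (Z k ω)) ≤ (K * R ^ (c - a) : ℝ) := by
  have hprod : ∀ f : ℕ → ℝ, ∏ k ∈ range c, (if a ≤ k then f k else 1) = ∏ k ∈ Ico a c, f k := by
    intro f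
    rw [← prod_filter]
    exact prod_congr (by ext; simp [and_comm]) fun _ _ => rfl
  have hE := hU c (fun k x => if a ≤ k then g x else 1)
    (fun k => by by_cases hk : a ≤ k <;> simp only [hk, if_true, if_false, hg, isBLip_one])
    (fun k => by by_cases hk : a ≤ k <;> simp only [hk, if_true, if_false, hmono, monotone_const])
    (fun k x => by by_cases hk : a ≤ k <;> simp only [hk, if_true, if_false, hg0, zero_le_one])
  have hfactor : ∀ k, (SL.E fun ω => if a ≤ k then g (Z k ω) else 1).toReal
      = if a ≤ k then (SL.E fun ω => g (Z k ω)).toReal else 1 := fun k => by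
    by_cases hk : a ≤ k <;> simp [hk, SL.const_eq]
  simp only [hprod, hfactor] at hE
  refine hE.trans (EReal.coe_le_coe_iff.2 (mul_le_mul_of_nonneg_left ?_
    (zero_le_one.trans hU.one_le)))
  rw [← Nat.card_Ico, ← prod_const]
  exact prod_le_prod (fun k _ => EReal.toReal_nonneg (E_nonneg fun ω => hg0 _)) fun k _ =>
    EReal.toReal_le_toReal (hR k) (E_ne_bot _) (EReal.coe_ne_top R)

lemma UEND.V_lt_sum_min_le {v t b : ℝ} (hU : UEND SL K Z) (hmean : ∀ k, SL.E (Z k) ≤ 0)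
    (hvar : ∀ k, SL.E (fun ω => Z k ω ^ 2) ≤ v) (ht : 0 ≤ t) (hb : 0 ≤ b) (m n : ℕ) (x : ℝ) :
    SL.V {ω | x < ∑ k ∈ Ico m n, min (Z k ω) b}
      ≤ K * exp (-(t * x) + (n - m : ℕ) * (t ^ 2 * v * exp (t * b) / 2)) := by
  have hE := hU.E_prod_Ico_le (isBLip_exp_mul_min ht b) (fun x y hxy =>
      exp_le_exp.2 (mul_le_mul_of_nonneg_left (min_le_min_right b hxy) ht))
    (fun x => (exp_pos _).le) (fun k => E_exp_mul_min_le ht hb (hmean k) (hvar k)) m n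
  have hE' := E_mul_le (exp_pos (-(t * x))).le hE
  simp only [← exp_sum, ← mul_sum, ← exp_add, ← exp_nat_mul] at hE'
  rw [mul_left_comm, ← exp_add] at hE'
  refine V_le (fun ω => (exp_pos _).le) (fun ω hω => one_le_exp ?_) hE'
  rw [Set.mem_ofPred_eq] at hω
  linarith [mul_le_mul_of_nonneg_left hω.le ht]

/-- `log log 2 ^ j`, the value of the iterated logarithm along the dyadic scale. -/
def dyadicLogLog (j : ℕ) : ℝ := log (j * log 2)

lemma tendsto_dyadicLogLog : Tendsto dyadicLogLog atTop atTop :=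
  tendsto_log_atTop.comp (tendsto_natCast_atTop_atTop.atTop_mul_const (log_pos one_lt_two))

lemma sqrt_dyadicLogLog_le (j : ℕ) : √(dyadicLogLog j) ≤ j := by
  have hlog : log 2 ≤ 1 := by linarith [log_two_lt_d9]
  have hj : (j : ℝ) ≤ (j : ℝ) ^ 2 := by exact_mod_cast Nat.le_self_pow two_ne_zero j
  refine sqrt_le_iff.2 ⟨Nat.cast_nonneg j, ?_⟩
  calc dyadicLogLog j ≤ j * log 2 := log_le_self (by positivity)
    _ ≤ j * 1 := by gcongr
    _ ≤ (j : ℝ) ^ 2 := by rwa [mul_one]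

lemma summable_pow_mul_exp_neg_mul_dyadicLogLog {d : ℕ} {q : ℝ} (hq : d + 1 < q) :
    Summable fun j : ℕ => (j : ℝ) ^ d * exp (-(q * dyadicLogLog j)) := by
  have hpow : Summable fun j : ℕ => (log 2) ^ (-q) * (j : ℝ) ^ (d - q) :=
    (summable_nat_rpow.2 (by linarith)).mul_left _
  refine hpow.congr_atTop ?_
  filter_upwards [eventually_gt_atTop 0] with j hj
  have hj0 : (0 : ℝ) < j := Nat.cast_pos.2 hj
  have hlog : 0 < log 2 := log_pos one_lt_two
  have hexp : exp (-(q * dyadicLogLog j)) = (j * log 2) ^ (-q) := by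
    rw [rpow_def_of_pos (mul_pos hj0 hlog), dyadicLogLog]
    ring_nf
  rw [hexp, mul_rpow hj0.le hlog.le, sub_eq_add_neg, rpow_add hj0, rpow_natCast]
  ring

lemma sqrt_mul_dyadicLogLog_le_lilA {j n : ℕ} (hj : 1 ≤ j) (hn : 2 ^ j ≤ n) :
    √(2 * n * dyadicLogLog j) ≤ lilA n := by
  have hlog2 : 0 < log 2 := log_pos one_lt_two
  have hj0 : (0 : ℝ) < j := Nat.cast_pos.2 hj
  have hn' : (2 : ℝ) ^ j ≤ n := by exact_mod_cast hn
  have hlog : j * log 2 ≤ paperLog n := by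
    rw [← log_pow]
    exact log_le_log (by positivity) (hn'.trans (le_max_left _ _))
  have hloglog : dyadicLogLog j ≤ paperLog (paperLog n) :=
    log_le_log (mul_pos hj0 hlog2) (hlog.trans (le_max_left _ _))
  exact sqrt_le_sqrt (mul_le_mul_of_nonneg_left hloglog (by positivity))

/-- Gaussian exponential bounds, with variance proxy `r`, for the sums of at most `δ * N` variables
truncated at level `β ^ j`, where `N ≥ 2 ^ j`. The factor `A` lets the Chernoff parameter `c` be as
large as a multiple of `j`, which makes room for events of capacity `exp (-j)`. -/
def HasDyadicChernoff (SL : SublinearExp Ω) (K r β : ℝ) (Z : ℕ → Ω → ℝ) : Prop :=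
  ∀ A : ℝ, ∀ᶠ j : ℕ in atTop, ∀ (N c δ y : ℝ) (m n : ℕ), 2 ^ j ≤ N → 0 ≤ c → c ≤ A * j →
    (n - m : ℕ) ≤ δ * N → SL.V {ω | y * √N < ∑ k ∈ Ico m n, min (Z k ω) (β ^ j)}
      ≤ K * exp (-(c * y) + c ^ 2 * δ * r / 2)

lemma UEND.hasDyadicChernoff {v r β : ℝ} (hU : UEND SL K Z) (hmean : ∀ k, SL.E (Z k) ≤ 0)
    (hvar : ∀ k, SL.E (fun ω => Z k ω ^ 2) ≤ v) (hv : 0 ≤ v) (hvr : v < r) (hβ0 : 0 ≤ β)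
    (hβ : β < √2) : HasDyadicChernoff SL K r β Z := by
  intro A
  have hlim : Tendsto (fun j : ℕ => v * exp (A * (j * (β / √2) ^ j))) atTop (nhds (v * exp 0)) := by
    have := tendsto_self_mul_const_pow_of_lt_one (by positivity) ((div_lt_one (by positivity)).2 hβ)
    simpa only [mul_zero] using (this.const_mul A).rexp.const_mul v
  rw [exp_zero, mul_one] at hlim
  filter_upwards [hlim.eventually_le_const hvr] with j hj N c δ y m n hN hc hcA hδ
  have hδN : 0 ≤ δ * N := (Nat.cast_nonneg _).trans hδ
  have hN0 : 0 < N := (by positivity : (0 : ℝ) < 2 ^ j).trans_le hN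
  have hsqrtN : √2 ^ j ≤ √N :=
    le_sqrt_of_sq_le (by rwa [← pow_mul, mul_comm, pow_mul, sq_sqrt zero_le_two])
  have htb : c / √N * β ^ j ≤ A * (j * (β / √2) ^ j) :=
    calc c / √N * β ^ j ≤ A * j / √2 ^ j * β ^ j := by gcongr; exact hc.trans hcA
      _ = A * (j * (β / √2) ^ j) := by rw [div_pow]; ring
  have hproxy : v * exp (c / √N * β ^ j) ≤ r :=
    (mul_le_mul_of_nonneg_left (exp_le_exp.2 htb) hv).trans hj
  refine (hU.V_lt_sum_min_le hmean hvar (div_nonneg hc (sqrt_nonneg N)) (pow_nonneg hβ0 j) m n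
    (y * √N)).trans ?_
  refine mul_le_mul_of_nonneg_left (exp_le_exp.2 (add_le_add (le_of_eq ?_) ?_))
    (zero_le_one.trans hU.one_le)
  · field_simp
  · calc (n - m : ℕ) * ((c / √N) ^ 2 * v * exp (c / √N * β ^ j) / 2)
        = (n - m : ℕ) * (c ^ 2 / N * (v * exp (c / √N * β ^ j)) / 2) := by
          rw [div_pow, sq_sqrt hN0.le]; ring
      _ ≤ δ * N * (c ^ 2 / N * r / 2) := by gcongr
      _ = c ^ 2 * δ * r / 2 := by field_simp

namespace HasDyadicChernoff

variable {r β : ℝ}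

lemma ae_eventually_forall_sum_range_le {s : ℝ} (h : HasDyadicChernoff SL K r β Z) (hK : 0 ≤ K)
    (hs : 0 < s) (hrs : r < s ^ 2) (M : ℕ) :
    ∀ᵐ ω ∂SL.outer, ∀ᶠ j in atTop, ∀ i < M, ∑ k ∈ range (i * 2 ^ j), min (Z k ω) (β ^ j)
      ≤ s * √(2 * dyadicLogLog j) * √(i * 2 ^ j) := by
  set q := 2 - r / s ^ 2 with hq
  have hq1 : (0 : ℕ) + 1 < q := by
    have := (div_lt_one (by positivity : 0 < s ^ 2)).2 hrs
    rw [Nat.cast_zero]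
    linarith
  have hV : ∀ᶠ j in atTop, ∀ i < M,
      SL.V {ω | s * √(2 * dyadicLogLog j) * √(i * 2 ^ j)
        < ∑ k ∈ range (i * 2 ^ j), min (Z k ω) (β ^ j)} ≤ K * exp (-(q * dyadicLogLog j)) := by
    filter_upwards [h (√2 / s), tendsto_dyadicLogLog.eventually_ge_atTop 0] with j hj hl i _
    rcases Nat.eq_zero_or_pos i with rfl | hi
    · exact V_le (ξ := fun _ => 0) (fun _ => le_rfl) (by simp)
        ((SL.const_eq 0).le.trans (by positivity))
    have hi1 : (1 : ℝ) ≤ i := Nat.one_le_cast.2 hi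
    have hc : √(2 * dyadicLogLog j) / s ≤ √2 / s * j := by
      rw [sqrt_mul zero_le_two, div_mul_eq_mul_div]
      gcongr
      exact sqrt_dyadicLogLog_le j
    rw [range_eq_Ico]
    refine (hj (i * 2 ^ j) _ 1 _ 0 (i * 2 ^ j) (le_mul_of_one_le_left (by positivity) hi1)
      (by positivity) hc (by simp)).trans_eq ?_
    congr 2
    have hsq := sq_sqrt (mul_nonneg zero_le_two hl)
    field_simp
    rw [hsq, hq]
    field_simp
    ring
  have hsum : Summable fun j : ℕ => (M : ℝ) * (K * exp (-(q * dyadicLogLog j))) := by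
    simpa using ((summable_pow_mul_exp_neg_mul_dyadicLogLog hq1).mul_left K).mul_left (M : ℝ)
  exact ae_eventually_forall_lt_le hV hsum

lemma ae_eventually_forall_sum_Ico_le_of_le_two_pow (h : HasDyadicChernoff SL K r β Z)
    {a b : ℕ → ℕ → ℕ} (hab : ∀ j i, b j i - a j i ≤ 2 ^ j) (m : ℕ) :
    ∀ᵐ ω ∂SL.outer, ∀ᶠ j in atTop, ∀ i < m * j,
      ∑ k ∈ Ico (a j i) (b j i), min (Z k ω) (β ^ j)
        ≤ (3 + r / 2) * √(dyadicLogLog j) * √(2 ^ j) := by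
  have hV : ∀ᶠ j in atTop, ∀ i < m * j,
      SL.V {ω | (3 + r / 2) * √(dyadicLogLog j) * √(2 ^ j)
        < ∑ k ∈ Ico (a j i) (b j i), min (Z k ω) (β ^ j)} ≤ K * exp (-(3 * dyadicLogLog j)) := by
    filter_upwards [h 1, tendsto_dyadicLogLog.eventually_ge_atTop 0] with j hj hl i _
    have hc : √(dyadicLogLog j) ≤ 1 * j := (sqrt_dyadicLogLog_le j).trans_eq (one_mul _).symm
    have hlen : ((b j i - a j i : ℕ) : ℝ) ≤ 1 * 2 ^ j := by
      rw [one_mul]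
      exact_mod_cast hab j i
    refine (hj (2 ^ j) _ 1 _ _ _ le_rfl (sqrt_nonneg _) hc hlen).trans_eq ?_
    congr 2
    linear_combination (-3 : ℝ) * sq_sqrt hl
  have hsum : Summable fun j : ℕ => ((m * j : ℕ) : ℝ) * (K * exp (-(3 * dyadicLogLog j))) := by
    refine ((summable_pow_mul_exp_neg_mul_dyadicLogLog (d := 1) (q := 3)
      (by norm_num)).mul_left (m * K)).congr fun j => ?_
    push_cast
    ring
  exact ae_eventually_forall_lt_le hV hsum

lemma ae_eventually_forall_sum_Ico_le_of_mul_le_two_pow (h : HasDyadicChernoff SL K r β Z)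
    (hK : 0 ≤ K) {a b : ℕ → ℕ → ℕ} (hab : ∀ j i, (b j i - a j i) * j ≤ 2 ^ j) (m : ℕ) :
    ∀ᵐ ω ∂SL.outer, ∀ᶠ j in atTop, ∀ i < m * 2 ^ j,
      ∑ k ∈ Ico (a j i) (b j i), min (Z k ω) (β ^ j) ≤ √(dyadicLogLog j) * √(2 ^ j) := by
  have hV : ∀ᶠ j in atTop, ∀ i < m * 2 ^ j,
      SL.V {ω | √(dyadicLogLog j) * √(2 ^ j)
        < ∑ k ∈ Ico (a j i) (b j i), min (Z k ω) (β ^ j)} ≤ K * exp (-j) := by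
    filter_upwards [h 1, eventually_gt_atTop 0,
      (tendsto_sqrt_atTop.comp tendsto_dyadicLogLog).eventually_ge_atTop (1 + r / 2)]
      with j hj hj0 hl i _
    have hj0' : (0 : ℝ) < j := Nat.cast_pos.2 hj0
    have hlen : ((b j i - a j i : ℕ) : ℝ) ≤ 1 / j * 2 ^ j := by
      rw [one_div_mul_eq_div, le_div_iff₀ hj0']
      exact_mod_cast hab j i
    -- A union over `m * 2 ^ j` events needs capacity `exp (-j)`, so the Chernoff parameter is `j`.
    refine (hj (2 ^ j) j (1 / j) _ _ _ le_rfl hj0'.le (one_mul _).ge hlen).trans ?_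
    refine mul_le_mul_of_nonneg_left (exp_le_exp.2 ?_) hK
    rw [Function.comp_apply] at hl
    field_simp
    linarith
  have hsum : Summable fun j : ℕ => ((m * 2 ^ j : ℕ) : ℝ) * (K * exp (-j)) := by
    have hratio : 2 / exp 1 < 1 := (div_lt_one (exp_pos 1)).2 exp_one_gt_two
    refine ((summable_geometric_of_lt_one (by positivity) hratio).mul_left (m * K)).congr
      fun j => ?_
    rw [div_pow, ← exp_nat_mul, mul_one, exp_neg]
    push_cast
    ring
  exact ae_eventually_forall_lt_le hV hsum

end HasDyadicChernoff

lemma ae_eventually_forall_le_pow {p C β : ℝ} (hp : 0 ≤ p) (hβ : 0 < β) (hβp : 2 < β ^ p)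
    (hC : ∀ k, SL.E (fun ω => |Z k ω| ^ p) ≤ C) (m : ℕ) :
    ∀ᵐ ω ∂SL.outer, ∀ᶠ j in atTop, ∀ k < m * 2 ^ j, Z k ω ≤ β ^ j := by
  have hsum : Summable fun j : ℕ => ((m * 2 ^ j : ℕ) : ℝ) * (((β ^ j) ^ p)⁻¹ * C) := by
    have hratio : 2 / β ^ p < 1 := (div_lt_one (by positivity)).2 hβp
    refine ((summable_geometric_of_lt_one (by positivity) hratio).mul_left (m * C)).congr
      fun j => ?_
    rw [div_pow, ← rpow_natCast β j, ← rpow_natCast (β ^ p), ← rpow_mul hβ.le, ← rpow_mul hβ.le,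
      mul_comm p]
    push_cast
    ring
  exact ae_eventually_forall_lt_le
    (.of_forall fun j k _ => V_lt_le_of_E_abs_rpow_le hp (pow_pos hβ j) (hC k)) hsum

lemma HasDyadicChernoff.ae_eventually_forall_sum_le {r β s : ℝ}
    (h : HasDyadicChernoff SL K r β Z) (hK : 0 ≤ K) (hs : 0 < s) (hrs : r < s ^ 2) {M : ℕ}
    (hZ : ∀ᵐ ω ∂SL.outer, ∀ᶠ j in atTop, ∀ k < M * 2 ^ j, Z k ω ≤ β ^ j) :
    ∀ᵐ ω ∂SL.outer, ∀ᶠ j in atTop, ∀ n < M * 2 ^ j, ∑ k ∈ range n, Z k ω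
      ≤ s * √(2 * dyadicLogLog j) * √n + (4 + r / 2) * √(dyadicLogLog j) * √(2 ^ j) := by
  have hblock : ∀ j i : ℕ, i * (2 ^ j / j) - i * (2 ^ j / j) / 2 ^ j * 2 ^ j ≤ 2 ^ j := fun j i =>
    tsub_le_iff_left.2 (Nat.lt_div_mul_add (Nat.two_pow_pos j)).le
  have hcell : ∀ j n : ℕ, (n - n / (2 ^ j / j) * (2 ^ j / j)) * j ≤ 2 ^ j := fun j n =>
    sub_div_div_mul_mul_le n Nat.lt_two_pow_self.le
  filter_upwards [h.ae_eventually_forall_sum_range_le hK hs hrs M,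
    h.ae_eventually_forall_sum_Ico_le_of_le_two_pow hblock (2 * M),
    h.ae_eventually_forall_sum_Ico_le_of_mul_le_two_pow hK hcell M, hZ]
    with ω hgrid hmid hfine htrunc
  filter_upwards [hgrid, hmid, hfine, htrunc, eventually_gt_atTop 0]
    with j hgrid hmid hfine htrunc hj n hn
  set d := 2 ^ j / j
  set n₂ := n / d * d
  set n₁ := n₂ / 2 ^ j * 2 ^ j
  have hn₂ : n₂ ≤ n := Nat.div_mul_le_self n d
  have hn₁ : n₁ ≤ n₂ := Nat.div_mul_le_self n₂ (2 ^ j)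
  have hcoarse : ∑ k ∈ range n₁, min (Z k ω) (β ^ j) ≤ s * √(2 * dyadicLogLog j) * √n := by
    refine (hgrid _ (Nat.div_lt_of_lt_mul (by rw [mul_comm]; exact hn₂.trans_lt hn))).trans ?_
    gcongr
    exact_mod_cast hn₁.trans hn₂
  have hmiddle := hmid (n / d) (div_div_lt_two_mul_mul hj Nat.lt_two_pow_self.le hn)
  calc ∑ k ∈ range n, Z k ω = ∑ k ∈ range n, min (Z k ω) (β ^ j) :=
        sum_congr rfl fun k hk => (min_eq_left (htrunc k ((mem_range.1 hk).trans hn))).symm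
    _ = ∑ k ∈ range n₁, min (Z k ω) (β ^ j) + ∑ k ∈ Ico n₁ n₂, min (Z k ω) (β ^ j)
          + ∑ k ∈ Ico n₂ n, min (Z k ω) (β ^ j) := by
        rw [range_eq_Ico, range_eq_Ico, sum_Ico_consecutive _ (Nat.zero_le _) hn₁,
          sum_Ico_consecutive _ (Nat.zero_le _) hn₂]
    _ ≤ s * √(2 * dyadicLogLog j) * √n + (3 + r / 2) * √(dyadicLogLog j) * √(2 ^ j)
          + √(dyadicLogLog j) * √(2 ^ j) := add_le_add (add_le_add hcoarse hmiddle) (hfine n hn)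
    _ = s * √(2 * dyadicLogLog j) * √n + (4 + r / 2) * √(dyadicLogLog j) * √(2 ^ j) := by ring

lemma UEND.ae_eventually_sum_le_mul_lilA {p C σ s : ℝ} (hU : UEND SL K Z) (hp : 2 < p)
    (hC : ∀ k, SL.E (fun ω => |Z k ω| ^ p) ≤ C) (hmean : ∀ k, SL.E (Z k) ≤ 0)
    (hvar : ∀ k, SL.E (fun ω => Z k ω ^ 2) ≤ (σ ^ 2 : ℝ)) (hσ : 0 ≤ σ) (hσs : σ < s) :
    ∀ᵐ ω ∂SL.outer, ∀ᶠ n in atTop, ∑ k ∈ range n, Z k ω ≤ s * lilA n := by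
  obtain ⟨β, hβ0, hβ, hβp⟩ := exists_rpow_gt_two_and_lt_sqrt_two hp
  obtain ⟨s₁, hσs₁, hs₁⟩ := exists_between hσs
  have hs₁0 : 0 < s₁ := hσ.trans_lt hσs₁
  obtain ⟨r, hσr, hrs₁⟩ := exists_between (pow_lt_pow_left₀ hσs₁ hσ two_ne_zero)
  obtain ⟨M, hM⟩ := exists_nat_ge (max 1 (((4 + r / 2) / (s - s₁)) ^ 2))
  have hM0 : 0 < M := Nat.cast_pos.1 (zero_lt_one.trans_le ((le_max_left _ _).trans hM))
  have hsM : 4 + r / 2 ≤ (s - s₁) * √M := by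
    rw [← div_le_iff₀' (sub_pos.2 hs₁)]
    exact le_sqrt_of_sq_le ((le_max_right _ _).trans hM)
  have hChernoff := hU.hasDyadicChernoff hmean hvar (sq_nonneg σ) hσr hβ0.le hβ
  filter_upwards [hChernoff.ae_eventually_forall_sum_le (zero_le_one.trans hU.one_le) hs₁0 hrs₁
    (ae_eventually_forall_le_pow (by linarith) hβ0 hβp hC (2 * M))] with ω hω
  refine eventually_of_eventually_dyadic_block hM0 ?_
  filter_upwards [hω, eventually_ge_atTop 1] with j hj hj1 n hMn hnM
  have hcast : (M : ℝ) * 2 ^ j ≤ n := by exact_mod_cast hMn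
  have hloglog : √(dyadicLogLog j) ≤ √(2 * dyadicLogLog j) := by
    rw [sqrt_mul zero_le_two]
    exact le_mul_of_one_le_left (sqrt_nonneg _) (one_le_sqrt.2 one_le_two)
  have hremainder : (4 + r / 2) * √(2 ^ j) ≤ (s - s₁) * √n :=
    calc (4 + r / 2) * √(2 ^ j) ≤ (s - s₁) * √M * √(2 ^ j) := by gcongr
      _ = (s - s₁) * √(M * 2 ^ j) := by rw [mul_assoc, ← sqrt_mul (Nat.cast_nonneg M)]
      _ ≤ (s - s₁) * √n := by gcongr
  calc ∑ k ∈ range n, Z k ω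
      ≤ s₁ * √(2 * dyadicLogLog j) * √n + (4 + r / 2) * √(dyadicLogLog j) * √(2 ^ j) := hj n hnM
    _ = s₁ * √(2 * dyadicLogLog j) * √n + (4 + r / 2) * √(2 ^ j) * √(dyadicLogLog j) := by ring
    _ ≤ s₁ * √(2 * dyadicLogLog j) * √n + (s - s₁) * √n * √(2 * dyadicLogLog j) := by
        gcongr
    _ = s * √(2 * n * dyadicLogLog j) := by
        rw [mul_right_comm 2, sqrt_mul' _ (Nat.cast_nonneg n)]; ring
    _ ≤ s * lilA n := mul_le_mul_of_nonneg_left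
        (sqrt_mul_dyadicLogLog_le_lilA hj1 ((Nat.le_mul_of_pos_left _ hM0).trans hMn))
        (hσ.trans hσs.le)

lemma IsBLip.comp {g f : ℝ → ℝ} {L : ℝ≥0} (hg : IsBLip g) (hf : LipschitzWith L f) :
    IsBLip fun x => g (f x) :=
  let ⟨⟨L', hL'⟩, M, hM⟩ := hg
  ⟨⟨L' * L, hL'.comp hf⟩, M, fun x => hM (f x)⟩

variable {X : ℕ → Ω → ℝ}

lemma UEND.comp_monotone {f : ℝ → ℝ} {L : ℝ≥0} (hU : UEND SL K X) (hf : LipschitzWith L f)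
    (hmono : Monotone f) : UEND SL K fun i ω => f (X i ω) := fun n g hg hgm hg0 =>
  hU n (fun i x => g i (f x)) (fun i => (hg i).comp hf) (fun i => (hgm i).comp hmono)
    fun i x => hg0 i (f x)

lemma LEND.comp_antitone {f : ℝ → ℝ} {L : ℝ≥0} (hL : LEND SL K X) (hf : LipschitzWith L f)
    (hanti : Antitone f) : UEND SL K fun i ω => f (X i ω) := fun n g hg hgm hg0 =>
  hL n (fun i x => g i (f x)) (fun i => (hg i).comp hf) (fun i => (hgm i).comp_antitone hanti)
    fun i x => hg0 i (f x)

lemma UEND.ae_limsup_le {p C μ σ : ℝ} (hU : UEND SL K X) (hp : 2 < p)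
    (hC : ∀ i, SL.E (fun ω => |X i ω| ^ p) ≤ C) (hμ : ∀ i, SL.E (X i) ≤ μ) (hσ0 : 0 ≤ σ)
    (hσ : ∀ i, SL.E (fun ω => (X i ω - μ) ^ 2) ≤ (σ ^ 2 : ℝ)) :
    ∀ᵐ ω ∂SL.outer, limsup (fun n : ℕ =>
      (((∑ k ∈ range n, X k ω - n * μ) / lilA n : ℝ) : EReal)) atTop ≤ σ := by
  have hcentered : UEND SL K fun i ω => X i ω - μ :=
    hU.comp_monotone (f := fun x => x - μ) (LipschitzWith.id.sub (LipschitzWith.const μ))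
      fun x y hxy => sub_le_sub_right hxy μ
  have hmean : ∀ i, SL.E (fun ω => X i ω - μ) ≤ 0 := fun i => by
    simpa only [← sub_eq_add_neg, sub_self, EReal.coe_zero]
      using E_add_le (hμ i) (SL.const_eq (-μ)).le
  have hmoment : ∀ i, SL.E (fun ω => |X i ω - μ| ^ p)
      ≤ (2 ^ (p - 1) * |μ| ^ p + 2 ^ (p - 1) * C : ℝ) := fun i =>
    E_le_of_le_add_mul (by positivity) (hC i) fun ω =>
      (abs_sub_rpow_le (X i ω) μ (by linarith)).trans_eq (by ring)
  refine _root_.ae_limsup_le fun s hs => ?_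
  filter_upwards [hcentered.ae_eventually_sum_le_mul_lilA hp hmoment hmean hσ hσ0 hs] with ω hω
  filter_upwards [hω] with n hn
  rw [sum_sub_distrib, sum_const, card_range, nsmul_eq_mul] at hn
  exact div_le_of_le_mul₀ (sqrt_nonneg _) (hσ0.trans hs.le) hn

lemma LEND.ae_le_liminf {p C ν τ : ℝ} (hL : LEND SL K X) (hp : 2 < p)
    (hC : ∀ i, SL.E (fun ω => |X i ω| ^ p) ≤ C) (hν : ∀ i, ν ≤ SL.cE (X i)) (hτ0 : 0 ≤ τ)
    (hτ : ∀ i, SL.E (fun ω => (X i ω - ν) ^ 2) ≤ (τ ^ 2 : ℝ)) :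
    ∀ᵐ ω ∂SL.outer, (-τ : ℝ) ≤ liminf (fun n : ℕ =>
      (((∑ k ∈ range n, X k ω - n * ν) / lilA n : ℝ) : EReal)) atTop := by
  have hneg : UEND SL K fun i ω => -X i ω :=
    hL.comp_antitone (f := fun x => -x) LipschitzWith.id.neg fun x y hxy => neg_le_neg hxy
  filter_upwards [hneg.ae_limsup_le (μ := -ν) hp (by simpa only [abs_neg] using hC)
    (fun i => EReal.le_neg_of_le_neg (hν i)) hτ0
    (fun i => by simpa only [neg_sub_neg, ← neg_sub (X i _) ν, neg_sq] using hτ i)] with ω hω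
  have hseq : (fun n : ℕ => (((∑ k ∈ range n, -X k ω - n * -ν) / lilA n : ℝ) : EReal))
      = -fun n : ℕ => (((∑ k ∈ range n, X k ω - n * ν) / lilA n : ℝ) : EReal) := by
    funext n
    rw [Pi.neg_apply, ← EReal.coe_neg, sum_neg_distrib]
    congr 1
    ring
  rw [hseq, EReal.limsup_neg] at hω
  rw [EReal.coe_neg]
  exact EReal.neg_le_of_neg_le hω

lemma IdentDist.E_le_toReal {φ : ℝ → ℝ} (hid : IdentDist SL X) (hφ : IsLocLip φ)
    (htop : SL.E (fun ω => φ (X 0 ω)) ≠ ⊤) (i : ℕ) :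
    SL.E (fun ω => φ (X i ω)) ≤ (SL.E fun ω => φ (X 0 ω)).toReal :=
  (hid i φ hφ).trans_le (EReal.le_coe_toReal htop)

lemma E_ne_top_of_le_add_mul {Y Y' : Ω → ℝ} {a c : ℝ} (hc : 0 ≤ c) (hY : SL.E Y ≠ ⊤)
    (h : ∀ ω, Y' ω ≤ a + c * Y ω) : SL.E Y' ≠ ⊤ :=
  ne_top_of_le_ne_top (EReal.coe_ne_top _) (E_le_of_le_add_mul hc (EReal.le_coe_toReal hY) h)

lemma E_ne_top_of_E_abs_rpow_ne_top {Y : Ω → ℝ} {p : ℝ} (hp : 1 ≤ p)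
    (hY : SL.E (fun ω => |Y ω| ^ p) ≠ ⊤) : SL.E Y ≠ ⊤ :=
  E_ne_top_of_le_add_mul zero_le_one hY fun ω => by
    have := rpow_le_one_add_rpow (abs_nonneg (Y ω)) zero_le_one hp
    rw [rpow_one] at this
    linarith [le_abs_self (Y ω)]

lemma IdentDist.E_le {p : ℝ} (hid : IdentDist SL X) (hp : 1 ≤ p)
    (hX : SL.E (fun ω => |X 0 ω| ^ p) ≠ ⊤) (i : ℕ) : SL.E (X i) ≤ (SL.E (X 0)).toReal :=
  hid.E_le_toReal isLocLip_id (E_ne_top_of_E_abs_rpow_ne_top hp hX) i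

lemma IdentDist.le_cE {p : ℝ} (hid : IdentDist SL X) (hp : 1 ≤ p)
    (hX : SL.E (fun ω => |X 0 ω| ^ p) ≠ ⊤) (i : ℕ) : (SL.cE (X 0)).toReal ≤ SL.cE (X i) := by
  have htop : SL.E (fun ω => -X 0 ω) ≠ ⊤ :=
    E_ne_top_of_E_abs_rpow_ne_top hp (by simpa only [abs_neg] using hX)
  rw [cE, cE, hid i _ isLocLip_neg]
  exact EReal.coe_toReal_le (by simpa using htop)

lemma IdentDist.E_sub_sq_le {p : ℝ} (hid : IdentDist SL X) (hp : 2 ≤ p)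
    (hX : SL.E (fun ω => |X 0 ω| ^ p) ≠ ⊤) (c : ℝ) (i : ℕ) :
    SL.E (fun ω => (X i ω - c) ^ 2)
      ≤ (√(SL.E fun ω => (X 0 ω - c) ^ 2).toReal ^ 2 : ℝ) := by
  rw [sq_sqrt (EReal.toReal_nonneg (E_nonneg fun ω => sq_nonneg _))]
  refine hid.E_le_toReal (isLocLip_sub_sq c)
    (E_ne_top_of_le_add_mul (a := 2 * (c ^ 2 + 1)) zero_le_two hX fun ω => ?_) i
  have := rpow_le_one_add_rpow (abs_nonneg (X 0 ω)) zero_le_two hp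
  rw [rpow_two, sq_abs] at this
  linarith [sq_nonneg (X 0 ω + c)]

end SublinearExp

end

theorem stmt18_general {Ω : Type} {SL : SublinearExp Ω} {X : ℕ → Ω → ℝ} {K p C μ ν σ τ : ℝ}
    (hp : 2 < p) (hC : ∀ i, SL.E (fun ω => |X i ω| ^ p) ≤ C)
    (hμ : ∀ i, SL.E (X i) ≤ μ) (hσ0 : 0 ≤ σ)
    (hσ : ∀ i, SL.E (fun ω => (X i ω - μ) ^ 2) ≤ (σ ^ 2 : ℝ))
    (hν : ∀ i, ν ≤ SL.cE (X i)) (hτ0 : 0 ≤ τ)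
    (hτ : ∀ i, SL.E (fun ω => (X i ω - ν) ^ 2) ≤ (τ ^ 2 : ℝ)) :
    (SublinearExp.UEND SL K X → SL.Vout {ω | (σ : EReal) < limsup (fun n : ℕ =>
        (((∑ k ∈ Finset.range n, X k ω - n * μ) / lilA n : ℝ) : EReal)) atTop} = 0) ∧
    (SublinearExp.END SL K X → SL.Vout
      ({ω | liminf (fun n : ℕ =>
          (((∑ k ∈ Finset.range n, X k ω - n * ν) / lilA n : ℝ) : EReal)) atTop < (-τ : ℝ)} ∪
        {ω | (σ : EReal) < limsup (fun n : ℕ =>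
          (((∑ k ∈ Finset.range n, X k ω - n * μ) / lilA n : ℝ) : EReal)) atTop}) = 0) := by
  simp only [SublinearExp.Vout_eq_outer]
  have hupper : SublinearExp.UEND SL K X → SL.outer {ω | (σ : EReal) < limsup (fun n : ℕ =>
      (((∑ k ∈ Finset.range n, X k ω - n * μ) / lilA n : ℝ) : EReal)) atTop} = 0 := fun hU => by
    simpa only [ae_iff, not_le] using hU.ae_limsup_le hp hC hμ hσ0 hσ
  refine ⟨hupper, fun ⟨hU, hL⟩ => measure_union_null ?_ (hupper hU)⟩
  simpa only [ae_iff, not_le] using hL.ae_le_liminf hp hC hν hτ0 hτ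

/-- Theorem 5.1: law of the iterated logarithm for (upper) extended negatively
dependent, identically distributed random variables with a finite `(2+γ)`-th
moment.  Here `σ̄₁² = 𝔼[(X₁ − ℰ[X₁])²]`, `σ̄₂² = 𝔼[(X₁ − 𝔼[X₁])²]` and
`a_n = √(2 n log log n)`. -/
theorem stmt18 {Ω : Type} (SL : SublinearExp Ω) (X : ℕ → Ω → ℝ)
    (K : ℝ) (hK : 1 ≤ K)
    (hid : SublinearExp.IdentDist SL X)
    (γ : ℝ) (hγ : 0 < γ)
    (hmom : SL.E (fun ω => |X 0 ω| ^ (2 + γ)) ≠ ⊤) :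
    (SublinearExp.UEND SL K X →
      SL.Vout {ω |
        ((Real.sqrt
            ((SL.E fun ω' => (X 0 ω' - (SL.E (X 0)).toReal) ^ 2).toReal) : ℝ) : EReal) <
          limsup (fun n : ℕ =>
            ((((∑ k ∈ Finset.range n, X k ω) - n * (SL.E (X 0)).toReal) /
                lilA n : ℝ) : EReal)) atTop} = 0) ∧
    (SublinearExp.END SL K X →
      SL.Vout
        ({ω | liminf (fun n : ℕ =>
              ((((∑ k ∈ Finset.range n, X k ω) - n * (SL.cE (X 0)).toReal) /
                  lilA n : ℝ) : EReal)) atTop <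
            ((-Real.sqrt
                ((SL.E fun ω' => (X 0 ω' - (SL.cE (X 0)).toReal) ^ 2).toReal) : ℝ) : EReal)} ∪
         {ω | ((Real.sqrt
                ((SL.E fun ω' => (X 0 ω' - (SL.E (X 0)).toReal) ^ 2).toReal) : ℝ) : EReal) <
            limsup (fun n : ℕ =>
              ((((∑ k ∈ Finset.range n, X k ω) - n * (SL.E (X 0)).toReal) /
                  lilA n : ℝ) : EReal)) atTop}) = 0) :=
  stmt18_general (by linarith) (hid.E_le_toReal (SublinearExp.isLocLip_abs_rpow (by linarith)) hmom)
    (hid.E_le (by linarith) hmom) (Real.sqrt_nonneg _) (hid.E_sub_sq_le (by linarith) hmom _)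
    (hid.le_cE (by linarith) hmom) (Real.sqrt_nonneg _) (hid.E_sub_sq_le (by linarith) hmom _)
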